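/- arXiv:2512.15314 — 2 statements merged into one kernel-verified Lean document; each statement's English description precedes it below -/
import Mathlib

section
/- Let V be a finite-dimensional subspace of W. Then the solution operator R_V : H → H is a continuous linear operator of finite rank (its range is contained in the finite-dimensional subspace i(V) of H), is self-adjoint (⟨R_V f, g⟩_H = ⟨f, R_V g⟩_H for all f, g ∈ H), positive semidefinite (⟨R_V f, f⟩_H ≥ 0 for all f ∈ H), and satisfies ‖R_V f‖_H ≤ ‖f‖_H for all f ∈ H. -/
open scoped InnerProductSpace

/-!
Let `T : V → H` be the restriction of `i` to `V`. The defining identity of `uV` says that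
`uV : H → V` is a formal adjoint of `T`, which forces it to be linear with `‖uV‖ ≤ ‖T‖`. So
`R_V = T ∘ uV` has the form `T T*`, and `⟪R_V f, g⟫ = ⟪uV f, uV g⟫` and `‖R_V‖ ≤ ‖T‖ ^ 2 ≤ ‖i‖ ^ 2`.
-/

section FormalAdjoint

variable {𝕜 E F : Type*} [RCLike 𝕜]
  [NormedAddCommGroup E] [InnerProductSpace 𝕜 E] [NormedAddCommGroup F] [InnerProductSpace 𝕜 F]

variable (𝕜) in
/-- `S` is a formal adjoint of `T`. Both are bare functions, so that a map known only through its
inner products, such as a Riesz representative, can be used for `S`. -/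
def IsFormalAdjoint (T : E → F) (S : F → E) : Prop :=
  ∀ y x, ⟪S y, x⟫_𝕜 = ⟪y, T x⟫_𝕜

namespace IsFormalAdjoint

protected theorem map_add {T : E → F} {S : F → E} (h : IsFormalAdjoint 𝕜 T S) (y z : F) :
    S (y + z) = S y + S z :=
  ext_inner_right 𝕜 fun x => by rw [inner_add_left, h, h, h, inner_add_left]

protected theorem map_smul {T : E → F} {S : F → E} (h : IsFormalAdjoint 𝕜 T S) (c : 𝕜) (y : F) :
    S (c • y) = c • S y :=
  ext_inner_right 𝕜 fun x => by rw [inner_smul_left, h, h, inner_smul_left]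

variable {T : E →L[𝕜] F} {S : F → E}

theorem norm_apply_le (h : IsFormalAdjoint 𝕜 T S) (y : F) : ‖S y‖ ≤ ‖T‖ * ‖y‖ := by
  rw [← innerSL_apply_norm 𝕜 (S y)]
  refine ContinuousLinearMap.opNorm_le_bound _ (by positivity) fun x => ?_
  calc ‖⟪S y, x⟫_𝕜‖ = ‖⟪y, T x⟫_𝕜‖ := by rw [h]
    _ ≤ ‖y‖ * ‖T x‖ := norm_inner_le_norm y (T x)
    _ ≤ ‖y‖ * (‖T‖ * ‖x‖) := by gcongr; exact T.le_opNorm x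
    _ = ‖T‖ * ‖y‖ * ‖x‖ := by ring

/-- A formal adjoint of a continuous linear map, bundled as a continuous linear map. -/
noncomputable def toContinuousLinearMap (h : IsFormalAdjoint 𝕜 T S) : F →L[𝕜] E :=
  LinearMap.mkContinuous { toFun := S, map_add' := h.map_add, map_smul' := h.map_smul } ‖T‖
    h.norm_apply_le

theorem norm_toContinuousLinearMap_le (h : IsFormalAdjoint 𝕜 T S) :
    ‖h.toContinuousLinearMap‖ ≤ ‖T‖ :=
  LinearMap.mkContinuous_norm_le _ (norm_nonneg T) _

theorem inner_apply_apply_left (h : IsFormalAdjoint 𝕜 T S) (y z : F) :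
    ⟪T (S y), z⟫_𝕜 = ⟪S y, S z⟫_𝕜 := by
  rw [← inner_conj_symm, ← h, inner_conj_symm]

theorem isPositive_comp (h : IsFormalAdjoint 𝕜 T S) :
    (T ∘L h.toContinuousLinearMap).IsPositive := by
  refine ContinuousLinearMap.isPositive_def.2 ⟨fun y z => ?_, fun y => ?_⟩
  · exact (h.inner_apply_apply_left y z).trans (h y (S z))
  · calc 0 ≤ RCLike.re ⟪S y, S y⟫_𝕜 := inner_self_nonneg
      _ = RCLike.re ⟪T (S y), y⟫_𝕜 := by rw [h.inner_apply_apply_left]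

theorem norm_comp_le (h : IsFormalAdjoint 𝕜 T S) :
    ‖T ∘L h.toContinuousLinearMap‖ ≤ ‖T‖ ^ 2 :=
  calc ‖T ∘L h.toContinuousLinearMap‖ ≤ ‖T‖ * ‖h.toContinuousLinearMap‖ := T.opNorm_comp_le _
    _ ≤ ‖T‖ * ‖T‖ := by gcongr; exact h.norm_toContinuousLinearMap_le
    _ = ‖T‖ ^ 2 := (sq ‖T‖).symm

end IsFormalAdjoint

end FormalAdjoint

theorem stmt_1_general
    {𝕜 H W : Type*} [RCLike 𝕜] [NormedAddCommGroup H] [InnerProductSpace 𝕜 H]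
    [NormedAddCommGroup W] [InnerProductSpace 𝕜 W]
    (i : W →L[𝕜] H) (V : Submodule 𝕜 W) (uV : H → W) (huVmem : ∀ f : H, uV f ∈ V)
    (huV : ∀ f : H, ∀ v ∈ V, ⟪uV f, v⟫_𝕜 = ⟪f, i v⟫_𝕜) :
    ∃ R : H →L[𝕜] H,
      (∀ f : H, R f = i (uV f)) ∧
      (∀ f : H, R f ∈ V.map i.toLinearMap) ∧
      R.IsPositive ∧
      ‖R‖ ≤ ‖i‖ ^ 2 := by
  have hadj : IsFormalAdjoint 𝕜 (i ∘L V.subtypeL) fun f => (⟨uV f, huVmem f⟩ : V) :=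
    fun f v => huV f v v.2
  have hnorm : ‖i ∘L V.subtypeL‖ ≤ ‖i‖ :=
    (i.opNorm_comp_le _).trans (mul_le_of_le_one_right (norm_nonneg i) V.norm_subtypeL_le)
  exact ⟨i ∘L V.subtypeL ∘L hadj.toContinuousLinearMap, fun _ => rfl,
    fun f => Submodule.mem_map_of_mem (huVmem f), hadj.isPositive_comp,
    hadj.norm_comp_le.trans (by gcongr)⟩

/-- Let `H`, `W` be real Hilbert spaces, `i : W → H` continuous linear
with `‖i w‖ ≤ ‖w‖`.  Let `V` be a finite-dimensional subspace of `W`, let `uV f ∈ V` be the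
Riesz representative (`⟪uV f, v⟫_W = ⟪f, i v⟫_H` for all `v ∈ V`) and `R_V f := i (uV f)`.
Then `R_V` is a continuous linear operator of finite rank (its range is contained in the
finite-dimensional subspace `i(V)` of `H`), self-adjoint, positive semidefinite, and
satisfies `‖R_V f‖ ≤ ‖f‖` for all `f`. -/
theorem stmt_1
    {H W : Type*} [NormedAddCommGroup H] [InnerProductSpace ℝ H] [CompleteSpace H]
    [NormedAddCommGroup W] [InnerProductSpace ℝ W] [CompleteSpace W]
    (i : W →L[ℝ] H) (hi : ∀ w : W, ‖i w‖ ≤ ‖w‖)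
    (V : Submodule ℝ W) (hVfin : FiniteDimensional ℝ V)
    (uV : H → W) (huVmem : ∀ f : H, uV f ∈ V)
    (huV : ∀ f : H, ∀ v ∈ V, ⟪uV f, v⟫_ℝ = ⟪f, i v⟫_ℝ) :
    ∃ R : H →L[ℝ] H,
      (∀ f : H, R f = i (uV f)) ∧
      FiniteDimensional ℝ (V.map i.toLinearMap) ∧
      (∀ f : H, R f ∈ V.map i.toLinearMap) ∧
      (∀ f g : H, ⟪R f, g⟫_ℝ = ⟪f, R g⟫_ℝ) ∧
      (∀ f : H, 0 ≤ ⟪R f, f⟫_ℝ) ∧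
      (∀ f : H, ‖R f‖ ≤ ‖f‖) := by
  obtain ⟨R, hR, hmem, hpos, hnorm⟩ := stmt_1_general i V uV huVmem huV
  have hi_le : ‖i‖ ≤ 1 := i.opNorm_le_bound zero_le_one (by simpa only [one_mul] using hi)
  have hR_le : ‖R‖ ≤ 1 := hnorm.trans (pow_le_one₀ (norm_nonneg i) hi_le)
  exact ⟨R, hR, inferInstance, hmem, hpos.inner_left_eq_inner_right, hpos.inner_nonneg_left,
    fun f => by simpa only [one_mul] using R.le_of_opNorm_le hR_le f⟩
end

section
/- Let G_n be a finite-dimensional subspace of G. For every w ∈ W there exists a unique r ∈ G_n such that ⟨i w + i r, i g⟩_H = 0 for all g ∈ G_n. Moreover, for every f ∈ H with ⟨f, i g⟩_H = 0 for all g ∈ G_n, this r satisfies ‖r‖_W ≤ ‖f − i w‖_H. -/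
open scoped InnerProductSpace

/-!
The gradient-type identity turns the condition `⟪i w + i r, i g⟫ = 0` for all `g ∈ G` into
`w + r ∈ Gᗮ`, so the correction is `r = -P w` with `P` the orthogonal projection of `W` onto `G`.
For the bound, `f - i w = i r + (f - (i w + i r))`, where the second summand is orthogonal to
`i r`, and `i` is isometric on `G`.
-/

section GradientType

variable {𝕜 H W : Type*} [RCLike 𝕜]
  [SeminormedAddCommGroup H] [InnerProductSpace 𝕜 H]

theorem norm_le_norm_add_of_inner_eq_zero {x y : H} (hxy : ⟪x, y⟫_𝕜 = 0) : ‖x‖ ≤ ‖x + y‖ := by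
  have pythagoras := norm_add_sq_eq_norm_sq_add_norm_sq_of_inner_eq_zero x y hxy
  refine nonneg_le_nonneg_of_sq_le_sq (norm_nonneg _) ?_
  linarith [mul_self_nonneg ‖y‖]

section Seminormed

variable [SeminormedAddCommGroup W] [InnerProductSpace 𝕜 W]

/-- The identity defining gradient-type subspaces, such as `∇H¹₀(Ω)` inside `H₀(curl; Ω)` with `i`
the inclusion into `L²`. Closedness of `G` is not part of the definition. -/
def IsGradientType (i : W → H) (G : Submodule 𝕜 W) : Prop :=
  ∀ w : W, ∀ g ∈ G, ⟪w, g⟫_𝕜 = ⟪i w, i g⟫_𝕜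

namespace IsGradientType

variable {i : W → H} {G G' : Submodule 𝕜 W}

theorem mono (hG : IsGradientType i G) (hle : G' ≤ G) : IsGradientType i G' :=
  fun w g hg => hG w g (hle hg)

theorem norm_map (hG : IsGradientType i G) {g : W} (hg : g ∈ G) : ‖i g‖ = ‖g‖ := by
  rw [norm_eq_sqrt_re_inner (𝕜 := 𝕜) (i g), norm_eq_sqrt_re_inner (𝕜 := 𝕜) g, hG g g hg]

theorem norm_le_norm_sub (hG : IsGradientType i G) {w r : W} {f : H} (hr : r ∈ G)
    (hwr : ⟪i w + i r, i r⟫_𝕜 = 0) (hf : ⟪f, i r⟫_𝕜 = 0) : ‖r‖ ≤ ‖f - i w‖ := by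
  have orthogonal : ⟪i r, f - (i w + i r)⟫_𝕜 = 0 := by
    rw [inner_eq_zero_symm, inner_sub_left, hf, hwr, sub_zero]
  calc
    ‖r‖ = ‖i r‖ := (hG.norm_map hr).symm
    _ ≤ ‖i r + (f - (i w + i r))‖ := norm_le_norm_add_of_inner_eq_zero orthogonal
    _ = ‖f - i w‖ := by congr 1; abel

end IsGradientType

end Seminormed

variable [NormedAddCommGroup W] [InnerProductSpace 𝕜 W]

theorem mem_and_add_mem_orthogonal_iff_eq_neg_starProjection {G : Submodule 𝕜 W}
    [G.HasOrthogonalProjection] {w r : W} :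
    r ∈ G ∧ w + r ∈ Gᗮ ↔ r = -G.starProjection w := by
  constructor
  · rintro ⟨hr, hwr⟩
    rw [G.eq_starProjection_of_mem_orthogonal (neg_mem hr) (by rwa [sub_neg_eq_add]), neg_neg]
  · rintro rfl
    rw [← sub_eq_add_neg]
    exact ⟨neg_mem (G.starProjection_apply_mem w), G.sub_starProjection_mem_orthogonal w⟩

namespace IsGradientType

variable {i : W → H} {G : Submodule 𝕜 W}

theorem forall_inner_add_eq_zero_iff_add_mem_orthogonal (hG : IsGradientType i G) {w r : W} :
    (∀ g ∈ G, ⟪i w + i r, i g⟫_𝕜 = 0) ↔ w + r ∈ Gᗮ := by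
  rw [Submodule.mem_orthogonal']
  refine forall₂_congr fun g hg => ?_
  rw [inner_add_left, inner_add_left, hG w g hg, hG r g hg]

theorem existsUnique_correction (hG : IsGradientType i G) [G.HasOrthogonalProjection] (w : W) :
    ∃! r : W, r ∈ G ∧ ∀ g ∈ G, ⟪i w + i r, i g⟫_𝕜 = 0 := by
  simp only [hG.forall_inner_add_eq_zero_iff_add_mem_orthogonal,
    mem_and_add_mem_orthogonal_iff_eq_neg_starProjection, existsUnique_eq]

end IsGradientType

theorem stmt_6_general {i : W → H} {G : Submodule 𝕜 W} [G.HasOrthogonalProjection]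
    (hG : IsGradientType i G) (w : W) :
    (∃! r : W, r ∈ G ∧ ∀ g ∈ G, ⟪i w + i r, i g⟫_𝕜 = 0) ∧
    (∀ r : W, (r ∈ G ∧ ∀ g ∈ G, ⟪i w + i r, i g⟫_𝕜 = 0) →
      ∀ f : H, (∀ g ∈ G, ⟪f, i g⟫_𝕜 = 0) → ‖r‖ ≤ ‖f - i w‖) :=
  ⟨hG.existsUnique_correction w,
    fun r ⟨hr, hwr⟩ _ hf => hG.norm_le_norm_sub hr (hwr r hr) (hf r hr)⟩

end GradientType

/-- Let `H`, `W` be real Hilbert spaces, `i : W → H` continuous linear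
with `‖i w‖ ≤ ‖w‖`, `G` a gradient-type closed subspace of `W`
(`⟪w, g⟫_W = ⟪i w, i g⟫_H` for `w ∈ W`, `g ∈ G`) and `Gn` a finite-dimensional subspace
of `G`.  For every `w ∈ W` there exists a unique `r ∈ Gn` such that
`⟪i w + i r, i g⟫_H = 0` for all `g ∈ Gn`.  Moreover, for every `f ∈ H` with
`⟪f, i g⟫_H = 0` for all `g ∈ Gn`, this `r` satisfies `‖r‖_W ≤ ‖f − i w‖_H`. -/
theorem stmt_6
    {H W : Type*} [NormedAddCommGroup H] [InnerProductSpace ℝ H] [CompleteSpace H]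
    [NormedAddCommGroup W] [InnerProductSpace ℝ W] [CompleteSpace W]
    (i : W →L[ℝ] H) (hi : ∀ w : W, ‖i w‖ ≤ ‖w‖)
    (G : Submodule ℝ W) (hGclosed : IsClosed (G : Set W))
    (hG : ∀ w : W, ∀ g ∈ G, ⟪w, g⟫_ℝ = ⟪i w, i g⟫_ℝ)
    (Gn : Submodule ℝ W) (hGnG : Gn ≤ G) (hGnfin : FiniteDimensional ℝ Gn) :
    ∀ w : W,
      (∃! r : W, r ∈ Gn ∧ ∀ g ∈ Gn, ⟪i w + i r, i g⟫_ℝ = 0) ∧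
      (∀ r : W, (r ∈ Gn ∧ ∀ g ∈ Gn, ⟪i w + i r, i g⟫_ℝ = 0) →
        ∀ f : H, (∀ g ∈ Gn, ⟪f, i g⟫_ℝ = 0) → ‖r‖ ≤ ‖f - i w‖) :=
  stmt_6_general (IsGradientType.mono (i := i) hG hGnG)
end
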